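/- arXiv:2210.13789 — 3 statements merged into one kernel-verified Lean document; each statement's English description precedes it below -/
import Mathlib

section
/- Let X and Y be complex Banach spaces and let N be a norm on the algebraic tensor product X ⊗ Y which is a reasonable cross norm, i.e. N(x ⊗ y) = ‖x‖·‖y‖ for all x ∈ X, y ∈ Y, and for all continuous linear functionals φ ∈ X* and ψ ∈ Y* with ‖φ‖ ≤ 1 and ‖ψ‖ ≤ 1 one has |(φ ⊗ ψ)(u)| ≤ N(u) for every u ∈ X ⊗ Y (where (φ ⊗ ψ)(x ⊗ y) = φ(x)ψ(y)). If x₁, x₂ ∈ X satisfy x₁ ⊥_BJ x₂, then for any y₁, y₂ ∈ Y and every scalar α ∈ ℂ, N((x₁ ⊗ y₁) + α·(x₂ ⊗ y₂)) ≥ N(x₁ ⊗ y₁); that is, x₁ ⊗ y₁ is Birkhoff-James orthogonal to x₂ ⊗ y₂ with respect to N. -/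
open scoped TensorProduct

/-!
Slicing `u ∈ X ⊗ Y` by a functional `ψ` on `Y` produces the vector `(id ⊗ ψ) u` of `X`, and by
Hahn–Banach the dual condition says that this slice has norm at most `N u` when `‖ψ‖ ≤ 1`. If `ψ`
norms `y₁`, the slice of `x₁ ⊗ y₁ + α • (x₂ ⊗ y₂)` is `‖y₁‖ • x₁ + (α * ψ y₂) • x₂`, and
orthogonality of `x₁` to `x₂` bounds its norm below by `‖x₁‖ * ‖y₁‖`.
-/

section BirkhoffJames

variable {𝕜 E : Type*} [NormedField 𝕜]

variable (𝕜) in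
/-- Birkhoff–James orthogonality of `u` to `v`. The size function `p` is an argument, so that the
notion applies to a norm that is not the one carried by an instance on `E`. -/
def IsBirkhoffJamesOrthogonal [AddCommGroup E] [Module 𝕜 E] (p : E → ℝ) (u v : E) : Prop :=
  ∀ α : 𝕜, p u ≤ p (u + α • v)

theorem IsBirkhoffJamesOrthogonal.norm_smul_le_norm_smul_add_smul [SeminormedAddCommGroup E]
    [NormedSpace 𝕜 E] {u v : E} (h : IsBirkhoffJamesOrthogonal 𝕜 norm u v) (c d : 𝕜) :
    ‖c • u‖ ≤ ‖c • u + d • v‖ := by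
  rcases eq_or_ne c 0 with rfl | hc
  · simp
  · calc ‖c • u‖ = ‖c‖ * ‖u‖ := norm_smul c u
      _ ≤ ‖c‖ * ‖u + (c⁻¹ * d) • v‖ := by gcongr; exact h _
      _ = ‖c • u + d • v‖ := by
        rw [← norm_smul, smul_add, smul_smul, mul_inv_cancel_left₀ hc]

end BirkhoffJames

section Slice

variable {R X Y : Type*} [CommSemiring R] [AddCommMonoid X] [Module R X] [AddCommMonoid Y]
  [Module R Y]

/-- The slice map `id ⊗ ψ : X ⊗ Y → X` of a linear functional `ψ` on `Y`, with `X ⊗ R` identified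
with `X`. -/
def tensorSlice (ψ : Y →ₗ[R] R) : X ⊗[R] Y →ₗ[R] X :=
  TensorProduct.rid R X ∘ₗ ψ.lTensor X

theorem tensorSlice_tmul (ψ : Y →ₗ[R] R) (x : X) (y : Y) :
    tensorSlice ψ (x ⊗ₜ[R] y) = ψ y • x := by
  simp [tensorSlice]

theorem apply_tensorSlice (φ : X →ₗ[R] R) (ψ : Y →ₗ[R] R) (u : X ⊗[R] Y) :
    φ (tensorSlice ψ u) = TensorProduct.lift ((LinearMap.mul R R).compl₁₂ φ ψ) u := by
  suffices φ ∘ₗ tensorSlice ψ = TensorProduct.lift ((LinearMap.mul R R).compl₁₂ φ ψ) from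
    LinearMap.congr_fun this u
  ext x y
  simp [tensorSlice_tmul, mul_comm]

end Slice

section CrossNorm

variable {𝕜 X Y : Type*} [RCLike 𝕜] [SeminormedAddCommGroup X] [NormedSpace 𝕜 X]

theorem norm_tensorSlice_le [AddCommMonoid Y] [Module 𝕜 Y] {ψ : Y →ₗ[𝕜] 𝕜} {u : X ⊗[𝕜] Y} {C : ℝ}
    (hC : ∀ φ : X →L[𝕜] 𝕜, ‖φ‖ ≤ 1 →
      ‖TensorProduct.lift ((LinearMap.mul 𝕜 𝕜).compl₁₂ (φ : X →ₗ[𝕜] 𝕜) ψ) u‖ ≤ C) :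
    ‖tensorSlice ψ u‖ ≤ C := by
  obtain ⟨φ, hφ, hφ_norming⟩ := exists_dual_vector'' 𝕜 (tensorSlice ψ u)
  calc ‖tensorSlice ψ u‖ = ‖φ (tensorSlice ψ u)‖ := by simp [hφ_norming]
    _ = ‖TensorProduct.lift ((LinearMap.mul 𝕜 𝕜).compl₁₂ (φ : X →ₗ[𝕜] 𝕜) ψ) u‖ := by
      rw [← apply_tensorSlice, ContinuousLinearMap.coe_coe]
    _ ≤ C := hC φ hφ

theorem stmt0_general [SeminormedAddCommGroup Y] [NormedSpace 𝕜 Y] (N : X ⊗[𝕜] Y → ℝ)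
    (N_tmul_le : ∀ (x : X) (y : Y), N (x ⊗ₜ[𝕜] y) ≤ ‖x‖ * ‖y‖)
    (N_dual : ∀ (φ : X →L[𝕜] 𝕜) (ψ : Y →L[𝕜] 𝕜), ‖φ‖ ≤ 1 → ‖ψ‖ ≤ 1 →
      ∀ u : X ⊗[𝕜] Y,
        ‖TensorProduct.lift ((LinearMap.mul 𝕜 𝕜).compl₁₂
            (φ : X →ₗ[𝕜] 𝕜) (ψ : Y →ₗ[𝕜] 𝕜)) u‖ ≤ N u)
    {x₁ x₂ : X} (hBJ : IsBirkhoffJamesOrthogonal 𝕜 norm x₁ x₂) (y₁ y₂ : Y) :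
    IsBirkhoffJamesOrthogonal 𝕜 N (x₁ ⊗ₜ[𝕜] y₁) (x₂ ⊗ₜ[𝕜] y₂) := by
  intro α
  obtain ⟨ψ, hψ, hψ_norming⟩ := exists_dual_vector'' 𝕜 y₁
  have slice_eq : tensorSlice (ψ : Y →ₗ[𝕜] 𝕜) (x₁ ⊗ₜ[𝕜] y₁ + α • (x₂ ⊗ₜ[𝕜] y₂)) =
      (‖y₁‖ : 𝕜) • x₁ + (α * ψ y₂) • x₂ := by
    simp [tensorSlice_tmul, hψ_norming, smul_smul]
  calc N (x₁ ⊗ₜ[𝕜] y₁) ≤ ‖x₁‖ * ‖y₁‖ := N_tmul_le x₁ y₁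
    _ = ‖(‖y₁‖ : 𝕜) • x₁‖ := by simp [norm_smul, mul_comm]
    _ ≤ ‖(‖y₁‖ : 𝕜) • x₁ + (α * ψ y₂) • x₂‖ := hBJ.norm_smul_le_norm_smul_add_smul _ _
    _ = ‖tensorSlice (ψ : Y →ₗ[𝕜] 𝕜) (x₁ ⊗ₜ[𝕜] y₁ + α • (x₂ ⊗ₜ[𝕜] y₂))‖ := by rw [slice_eq]
    _ ≤ N (x₁ ⊗ₜ[𝕜] y₁ + α • (x₂ ⊗ₜ[𝕜] y₂)) :=
      norm_tensorSlice_le fun φ hφ ↦ N_dual φ ψ hφ hψ _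

end CrossNorm

/-- Let `X` and `Y` be complex Banach spaces and `N` a reasonable cross
norm on the algebraic tensor product `X ⊗ Y`.  If `x₁ ⊥_BJ x₂` then
`x₁ ⊗ y₁ ⊥_BJ x₂ ⊗ y₂` with respect to `N`. -/
theorem stmt0
    {X Y : Type*} [NormedAddCommGroup X] [NormedSpace ℂ X] [CompleteSpace X]
    [NormedAddCommGroup Y] [NormedSpace ℂ Y] [CompleteSpace Y]
    (N : X ⊗[ℂ] Y → ℝ)
    -- `N` is a norm:
    (N_triangle : ∀ u v : X ⊗[ℂ] Y, N (u + v) ≤ N u + N v)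
    (N_smul : ∀ (c : ℂ) (u : X ⊗[ℂ] Y), N (c • u) = ‖c‖ * N u)
    (N_eq_zero : ∀ u : X ⊗[ℂ] Y, N u = 0 ↔ u = 0)
    -- `N` is a cross norm:
    (N_cross : ∀ (x : X) (y : Y), N (x ⊗ₜ[ℂ] y) = ‖x‖ * ‖y‖)
    -- the dual condition for a reasonable cross norm:
    (N_dual : ∀ (φ : X →L[ℂ] ℂ) (ψ : Y →L[ℂ] ℂ), ‖φ‖ ≤ 1 → ‖ψ‖ ≤ 1 →
      ∀ u : X ⊗[ℂ] Y,
        ‖TensorProduct.lift ((LinearMap.mul ℂ ℂ).compl₁₂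
            (φ : X →ₗ[ℂ] ℂ) (ψ : Y →ₗ[ℂ] ℂ)) u‖ ≤ N u)
    (x₁ x₂ : X) (hBJ : ∀ α : ℂ, ‖x₁ + α • x₂‖ ≥ ‖x₁‖)
    (y₁ y₂ : Y) :
    ∀ α : ℂ, N ((x₁ ⊗ₜ[ℂ] y₁) + α • (x₂ ⊗ₜ[ℂ] y₂)) ≥ N (x₁ ⊗ₜ[ℂ] y₁) :=
  stmt0_general N (fun x y ↦ (N_cross x y).le) N_dual hBJ y₁ y₂
end

section
/- Consider the functions on the three-point set {0,1,2} with values in ℂ, equipped with the supremum norm: f₁ = (1, 1+2i, 1−2i), f₂ = (1, 1, 1), g₁ = (1, −1+2i, −1−2i), g₂ = (2, 2, 2). Then: (i) f₁ is NOT Birkhoff-James orthogonal to f₂, i.e. there exists α ∈ ℂ with ‖f₁ + α f₂‖_∞ < ‖f₁‖_∞; (ii) g₁ is NOT Birkhoff-James orthogonal to g₂; (iii) nevertheless, the function F₁ : {0,1,2} × {0,1,2} → ℂ, F₁(s,t) = f₁(s)·g₁(t), IS Birkhoff-James orthogonal to F₂(s,t) = f₂(s)·g₂(t) in the supremum norm,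 i.e. ‖F₁ + α F₂‖_∞ ≥ ‖F₁‖_∞ = 5 for every α ∈ ℂ. -/
open Complex

open scoped ComplexConjugate

/-!
Both `f₁` and `g₁` have the shape `(c, z, z̄)`. Translating by the constant `-re z` shrinks `z` and
`z̄` to purely imaginary numbers, so such a function is not orthogonal to the constants as soon as
`re z ≠ 0` and `|c - re z| < |z|`. The tensor of `(c, z, z̄)` and `(d, w, w̄)` attains its norm at
`zw`, `zw̄` and their conjugates; when `re (zw) < 0 < re (zw̄)` a convex combination of these four
values vanishes, and no translation by a constant can shrink all of them at once.
-/

/-- Birkhoff-James orthogonality of `u` to `v` over the scalars `𝕜`: no multiple of `v` added to `u`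
decreases its norm. The relation is not symmetric. -/
def BirkhoffJamesOrthogonal (𝕜 : Type*) {E : Type*} [Norm E] [Add E] [SMul 𝕜 E] (u v : E) : Prop :=
  ∀ α : 𝕜, ‖u‖ ≤ ‖u + α • v‖

theorem not_birkhoffJamesOrthogonal_iff {𝕜 E : Type*} [Norm E] [Add E] [SMul 𝕜 E] {u v : E} :
    ¬ BirkhoffJamesOrthogonal 𝕜 u v ↔ ∃ α : 𝕜, ‖u + α • v‖ < ‖u‖ := by
  simp only [BirkhoffJamesOrthogonal, not_forall, not_le]

section SupNorm

theorem pi_norm_tensor {ι κ R : Type*} [Fintype ι] [Fintype κ] [NonUnitalNormedRing R]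
    [NormMulClass R] (f : ι → R) (g : κ → R) :
    ‖fun p : ι × κ => f p.1 * g p.2‖ = ‖f‖ * ‖g‖ := by
  simp_rw [Pi.norm_def, ← NNReal.coe_mul, nnnorm_mul, ← Finset.univ_product_univ,
    Finset.sup_product_left, NNReal.finset_sup_mul, NNReal.mul_finset_sup]

variable {𝕜 ι E : Type*} [RCLike 𝕜] [Fintype ι] [SeminormedAddCommGroup E] [InnerProductSpace 𝕜 E]

/-- In the `μ`-weighted average of `‖f i + α • g i‖ ^ 2` over `s` the cross terms cancel. -/
theorem birkhoffJamesOrthogonal_of_sum_inner_eq_zero {f g : ι → E} {s : Finset ι} {μ : ι → ℝ}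
    (μ_nonneg : ∀ i ∈ s, 0 ≤ μ i) (sum_pos : 0 < ∑ i ∈ s, μ i)
    (norming : ∀ i ∈ s, ‖f i‖ = ‖f‖) (sum_inner : ∑ i ∈ s, (μ i : 𝕜) * inner 𝕜 (f i) (g i) = 0) :
    BirkhoffJamesOrthogonal 𝕜 f g := by
  intro α
  have cross_terms : ∑ i ∈ s, μ i * RCLike.re (inner 𝕜 (f i) (α • g i)) = 0 := by
    simp_rw [inner_smul_right, ← RCLike.re_ofReal_mul, mul_left_comm _ α]
    rw [← map_sum, ← Finset.mul_sum, sum_inner, mul_zero, map_zero]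
  have sq_le : (∑ i ∈ s, μ i) * ‖f‖ ^ 2 ≤ (∑ i ∈ s, μ i) * ‖f + α • g‖ ^ 2 := by
    calc (∑ i ∈ s, μ i) * ‖f‖ ^ 2
        = ∑ i ∈ s, (μ i * ‖f i‖ ^ 2 + 2 * (μ i * RCLike.re (inner 𝕜 (f i) (α • g i)))) := by
          rw [Finset.sum_add_distrib, ← Finset.mul_sum, cross_terms, mul_zero, add_zero,
            Finset.sum_mul]
          exact Finset.sum_congr rfl fun i hi => by rw [norming i hi]
      _ ≤ ∑ i ∈ s, μ i * ‖f i + α • g i‖ ^ 2 := by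
          refine Finset.sum_le_sum fun i hi => ?_
          rw [norm_add_sq (𝕜 := 𝕜)]
          linarith [mul_nonneg (μ_nonneg i hi) (sq_nonneg ‖α • g i‖)]
      _ ≤ ∑ i ∈ s, μ i * ‖f + α • g‖ ^ 2 := by
          gcongr with i hi
          · exact μ_nonneg i hi
          · exact norm_le_pi_norm (f + α • g) i
      _ = (∑ i ∈ s, μ i) * ‖f + α • g‖ ^ 2 := (Finset.sum_mul ..).symm
  exact le_of_sq_le_sq (le_of_mul_le_mul_left sq_le sum_pos) (norm_nonneg _)

end SupNorm

/-- The function on three points with values `c`, `z` and `z̄`, the common shape of `f₁` and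
`g₁`. -/
def conjTriple (c z : ℂ) : Fin 3 → ℂ := ![c, z, conj z]

theorem norm_conjTriple (c z : ℂ) : ‖conjTriple c z‖ = max ‖c‖ ‖z‖ := by
  apply le_antisymm
  · refine (pi_norm_le_iff_of_nonempty _).2 fun i => ?_
    fin_cases i <;> simp [conjTriple]
  · exact max_le (norm_le_pi_norm (conjTriple c z) 0) (norm_le_pi_norm (conjTriple c z) 1)

theorem norm_conjTriple_apply_of_ne_zero {c z : ℂ} (hc : ‖c‖ ≤ ‖z‖) {i : Fin 3} (hi : i ≠ 0) :
    ‖conjTriple c z i‖ = ‖conjTriple c z‖ := by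
  rw [norm_conjTriple, max_eq_right hc]
  fin_cases i <;> simp_all [conjTriple]

theorem conjTriple_add_const (c z : ℂ) (r : ℝ) :
    conjTriple c z + Function.const _ (r : ℂ) = conjTriple (c + r) (z + r) := by
  ext i
  fin_cases i <;> simp [conjTriple]

theorem not_birkhoffJamesOrthogonal_conjTriple_const {c z k : ℂ} (hk : k ≠ 0) (hz : z.re ≠ 0)
    (hc : ‖c - z.re‖ < ‖z‖) :
    ¬ BirkhoffJamesOrthogonal ℂ (conjTriple c z) (Function.const _ k) := by
  refine not_birkhoffJamesOrthogonal_iff.2 ⟨((-z.re : ℝ) : ℂ) / k, ?_⟩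
  have translate : (((-z.re : ℝ) : ℂ) / k) • Function.const (Fin 3) k =
      Function.const _ ((-z.re : ℝ) : ℂ) := by
    ext
    simp [hk]
  have imaginary : z - z.re = z.im * I := sub_eq_of_eq_add' (re_add_im z).symm
  rw [translate, conjTriple_add_const, norm_conjTriple, norm_conjTriple, ofReal_neg,
    ← sub_eq_add_neg, ← sub_eq_add_neg, imaginary]
  refine lt_max_of_lt_right (max_lt hc ?_)
  simpa using abs_im_lt_norm.2 hz

theorem birkhoffJamesOrthogonal_tensor_conjTriple_const {c z d w : ℂ} (k : ℂ) (hc : ‖c‖ ≤ ‖z‖)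
    (hd : ‖d‖ ≤ ‖w‖) (h_neg : (z * w).re < 0) (h_pos : 0 < (z * conj w).re) :
    BirkhoffJamesOrthogonal ℂ (fun p : Fin 3 × Fin 3 => conjTriple c z p.1 * conjTriple d w p.2)
      (Function.const _ k) := by
  let s : Finset (Fin 3 × Fin 3) := {1, 2} ×ˢ {1, 2}
  -- Imaginary parts cancel between conjugate values, real parts by the choice of `μ`.
  let μ : Fin 3 × Fin 3 → ℝ := fun p => if p.1 = p.2 then (z * conj w).re else -(z * w).re
  have sum_s {M : Type} [AddCommMonoid M] (F : Fin 3 × Fin 3 → M) :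
      ∑ p ∈ s, F p = F (1, 1) + F (1, 2) + (F (2, 1) + F (2, 2)) := by
    simp [s, Finset.sum_product]
  refine birkhoffJamesOrthogonal_of_sum_inner_eq_zero (s := s) (μ := μ) ?_ ?_ ?_ ?_
  · intro p _
    dsimp only [μ]
    split_ifs <;> linarith
  · rw [sum_s]
    simp only [μ, if_true, Fin.reduceEq, if_false]
    linarith
  · have ne_zero : ∀ p ∈ s, p.1 ≠ 0 ∧ p.2 ≠ 0 := by decide
    intro p hp
    rw [pi_norm_tensor, norm_mul, norm_conjTriple_apply_of_ne_zero hc (ne_zero p hp).1,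
      norm_conjTriple_apply_of_ne_zero hd (ne_zero p hp).2]
  · rw [sum_s]
    apply Complex.ext <;> simp [μ, conjTriple] <;> ring

/-- On the three-point set `Fin 3` with the supremum norm, let
`f₁ = (1, 1+2i, 1−2i)`, `f₂ = (1,1,1)`, `g₁ = (1, −1+2i, −1−2i)`, `g₂ = (2,2,2)`.
Then `f₁` is not Birkhoff-James orthogonal to `f₂`, `g₁` is not Birkhoff-James orthogonal
to `g₂`, yet the elementary tensor `(s,t) ↦ f₁ s * g₁ t` (of norm `5`) is Birkhoff-James
orthogonal to `(s,t) ↦ f₂ s * g₂ t` in the supremum norm. -/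
theorem stmt2
    (f₁ f₂ g₁ g₂ : Fin 3 → ℂ)
    (hf₁ : f₁ = ![1, 1 + 2 * I, 1 - 2 * I])
    (hf₂ : f₂ = ![1, 1, 1])
    (hg₁ : g₁ = ![1, -1 + 2 * I, -1 - 2 * I])
    (hg₂ : g₂ = ![2, 2, 2])
    (F₁ F₂ : Fin 3 × Fin 3 → ℂ)
    (hF₁ : F₁ = fun p => f₁ p.1 * g₁ p.2)
    (hF₂ : F₂ = fun p => f₂ p.1 * g₂ p.2) :
    (∃ α : ℂ, ‖f₁ + α • f₂‖ < ‖f₁‖) ∧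
    (∃ α : ℂ, ‖g₁ + α • g₂‖ < ‖g₁‖) ∧
    ‖F₁‖ = 5 ∧
    (∀ α : ℂ, ‖F₁ + α • F₂‖ ≥ ‖F₁‖) := by
  have f₁_eq : f₁ = conjTriple 1 (1 + 2 * I) := by
    simp [hf₁, conjTriple, sub_eq_add_neg, map_ofNat]
  have g₁_eq : g₁ = conjTriple 1 (-1 + 2 * I) := by
    simp [hg₁, conjTriple, sub_eq_add_neg, map_ofNat]
  have f₂_eq : f₂ = Function.const _ 1 := by ext i; fin_cases i <;> simp [hf₂]
  have g₂_eq : g₂ = Function.const _ 2 := by ext i; fin_cases i <;> simp [hg₂]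
  have F₂_eq : F₂ = Function.const _ 2 := by ext; simp [hF₂, f₂_eq, g₂_eq]
  have sum_sq : (1 + 2 ^ 2 : ℝ) = 5 := by norm_num
  have norm_z : ‖(1 + 2 * I : ℂ)‖ = √5 := by simpa [sum_sq] using norm_add_mul_I 1 2
  have norm_w : ‖(-1 + 2 * I : ℂ)‖ = √5 := by simpa [sum_sq] using norm_add_mul_I (-1) 2
  have one_le : (1 : ℝ) ≤ √5 := Real.one_le_sqrt.2 (by norm_num)
  have two_lt : (2 : ℝ) < √5 := Real.lt_sqrt_of_sq_lt (by norm_num)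
  subst hF₁
  rw [F₂_eq, f₁_eq, g₁_eq, f₂_eq, g₂_eq]
  refine ⟨not_birkhoffJamesOrthogonal_iff.1 ?_, not_birkhoffJamesOrthogonal_iff.1 ?_, ?_, ?_⟩
  · apply not_birkhoffJamesOrthogonal_conjTriple_const <;> simp [norm_z]
  · apply not_birkhoffJamesOrthogonal_conjTriple_const <;> norm_num [norm_w, two_lt]
  · simp [pi_norm_tensor, norm_conjTriple, norm_z, norm_w, one_le]
  · apply birkhoffJamesOrthogonal_tensor_conjTriple_const <;> norm_num [norm_z, norm_w]
end

section
/- Let K₁ and K₂ be nonempty compact Hausdorff topological spaces and let f₁, f₂ ∈ C(K₁, ℂ) and g₁, g₂ ∈ C(K₂, ℂ). Then the function F₁ : K₁ × K₂ → ℂ, F₁(s,t) = f₁(s)·g₁(t), is strongly Birkhoff-James orthogonal in C(K₁ × K₂, ℂ) to F₂(s,t) = f₂(s)·g₂(t) — meaning ‖F₁ + F₂·h‖_∞ ≥ ‖F₁‖_∞ for every h ∈ C(K₁ × K₂, ℂ) — if and only if f₁ is strongly Birkhoff-James orthogonal to f₂ in C(K₁, ℂ) (i.e. ‖f₁ + f₂·a‖_∞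 ≥ ‖f₁‖_∞ for every a ∈ C(K₁, ℂ)) or g₁ is strongly Birkhoff-James orthogonal to g₂ in C(K₂, ℂ). -/
/-!
A function `f` is strongly Birkhoff–James orthogonal to `g` in `C(X, 𝕜)` exactly when `f = 0` or
`g` vanishes at some point where `|f|` attains its maximum: if `g` has no such zero, then
`a = - conj g * f / (1 + |g|²)` turns `f + g * a` into `f / (1 + |g|²)`, which has strictly smaller
norm than `f`. For nonzero `f` and `g`, the set where `|f ⊗ g|` attains its maximum is the product
of the corresponding sets for `f` and `g`, so a zero of `f₂ ⊗ g₂` there is a zero of `f₂` or of `g₂`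
in one of the factors.
-/

/-- Strong Birkhoff–James orthogonality `a ⊥ˢ_BJ b` in a ring viewed as a right module over itself,
the C*-algebra of the usual definition being replaced by an arbitrary seminormed ring. -/
def IsStrongBJOrthogonal {A : Type*} [NonUnitalSeminormedRing A] (a b : A) : Prop :=
  ∀ c : A, ‖a‖ ≤ ‖a + b * c‖

/-- The set of points where the norm of a continuous function on a compact space attains the
supremum norm. -/
def normPeakSet {X E : Type*} [TopologicalSpace X] [CompactSpace X] [SeminormedAddCommGroup E]
    (f : C(X, E)) : Set X :=
  {x | ‖f x‖ = ‖f‖}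

/-- The elementary tensor `f ⊗ g`, as the function `(s, t) ↦ f s * g t` on the product space. -/
def elementaryTensor {X Y R : Type*} [TopologicalSpace X] [TopologicalSpace Y]
    [TopologicalSpace R] [Mul R] [ContinuousMul R] (f : C(X, R)) (g : C(Y, R)) : C(X × Y, R) :=
  f.comp ContinuousMap.fst * g.comp ContinuousMap.snd

theorem normPeakSet_nonempty {X E : Type*} [TopologicalSpace X] [CompactSpace X]
    [NormedAddCommGroup E] {f : C(X, E)} (hf : f ≠ 0) : (normPeakSet f).Nonempty := by
  by_contra hempty
  have hlt (x : X) : ‖f x‖ < ‖f‖ :=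
    (f.norm_coe_le_norm x).lt_of_ne fun hx => hempty ⟨x, hx⟩
  exact lt_irrefl ‖f‖ ((f.norm_lt_iff (norm_pos_iff.2 hf)).2 hlt)

section ElementaryTensor

variable {X Y R : Type*} [TopologicalSpace X] [CompactSpace X] [TopologicalSpace Y] [CompactSpace Y]
  [NonUnitalNormedRing R] [NormMulClass R]

theorem norm_elementaryTensor (f : C(X, R)) (g : C(Y, R)) :
    ‖elementaryTensor f g‖ = ‖f‖ * ‖g‖ := by
  have norm_apply (s : X) (t : Y) : ‖elementaryTensor f g (s, t)‖ = ‖f s‖ * ‖g t‖ := norm_mul _ _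
  apply le_antisymm
  · refine (ContinuousMap.norm_le _ (by positivity)).2 fun ⟨s, t⟩ => ?_
    rw [norm_apply]
    gcongr
    exacts [f.norm_coe_le_norm s, g.norm_coe_le_norm t]
  · rcases eq_or_ne f 0 with rfl | hf
    · simp
    rcases eq_or_ne g 0 with rfl | hg
    · simp
    obtain ⟨s, hs⟩ := normPeakSet_nonempty hf
    obtain ⟨t, ht⟩ := normPeakSet_nonempty hg
    rw [← hs, ← ht, ← norm_apply]
    exact ContinuousMap.norm_coe_le_norm _ (s, t)

theorem elementaryTensor_eq_zero_iff {f : C(X, R)} {g : C(Y, R)} :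
    elementaryTensor f g = 0 ↔ f = 0 ∨ g = 0 := by
  rw [← norm_eq_zero, norm_elementaryTensor, mul_eq_zero, norm_eq_zero, norm_eq_zero]

theorem normPeakSet_elementaryTensor {f : C(X, R)} {g : C(Y, R)} (hf : f ≠ 0) (hg : g ≠ 0) :
    normPeakSet (elementaryTensor f g) = normPeakSet f ×ˢ normPeakSet g := by
  ext ⟨s, t⟩
  have mem_iff : (s, t) ∈ normPeakSet (elementaryTensor f g) ↔ ‖f s‖ * ‖g t‖ = ‖f‖ * ‖g‖ := by
    rw [← norm_elementaryTensor, ← norm_mul]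
    rfl
  rw [mem_iff]
  constructor
  · intro hst
    have hprod : ‖f s‖ * ‖g t‖ ≠ 0 :=
      hst ▸ mul_ne_zero (norm_ne_zero_iff.2 hf) (norm_ne_zero_iff.2 hg)
    have hfs : 0 < ‖f s‖ := (norm_nonneg _).lt_of_ne' (left_ne_zero_of_mul hprod)
    exact (mul_eq_mul_iff_eq_and_eq_of_pos (f.norm_coe_le_norm s) (g.norm_coe_le_norm t) hfs
      (norm_pos_iff.2 hg)).1 hst
  · rintro ⟨hs, ht⟩
    exact congrArg₂ (· * ·) hs ht

end ElementaryTensor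

section Orthogonality

variable {𝕜 : Type*} [RCLike 𝕜]

theorem exists_add_mul_apply_eq_div {X : Type*} [TopologicalSpace X] (f g : C(X, 𝕜)) :
    ∃ a : C(X, 𝕜), ∀ x, (f + g * a) x = f x / ((1 + ‖g x‖ ^ 2 : ℝ) : 𝕜) := by
  have denom_ne_zero (x : X) : ((1 + ‖g x‖ ^ 2 : ℝ) : 𝕜) ≠ 0 :=
    RCLike.ofReal_ne_zero.2 (by positivity)
  refine ⟨⟨fun x => -(star (g x) * f x) / ((1 + ‖g x‖ ^ 2 : ℝ) : 𝕜), ?_⟩, fun x => ?_⟩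
  · exact .div (by fun_prop) (RCLike.continuous_ofReal.comp (by fun_prop)) denom_ne_zero
  · have hconj : g x * star (g x) = (‖g x‖ : 𝕜) ^ 2 := RCLike.mul_conj (g x)
    simp only [ContinuousMap.add_apply, ContinuousMap.mul_apply, ContinuousMap.coe_mk]
    rw [eq_div_iff (denom_ne_zero x), add_mul, mul_assoc, div_mul_cancel₀ _ (denom_ne_zero x)]
    push_cast
    linear_combination -f x * hconj

variable {X Y : Type*} [TopologicalSpace X] [CompactSpace X] [TopologicalSpace Y] [CompactSpace Y]

theorem exists_norm_add_mul_lt {f g : C(X, 𝕜)} (hf : f ≠ 0) (hg : ∀ x ∈ normPeakSet f, g x ≠ 0) :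
    ∃ a : C(X, 𝕜), ‖f + g * a‖ < ‖f‖ := by
  obtain ⟨a, ha⟩ := exists_add_mul_apply_eq_div f g
  have hf_pos : 0 < ‖f‖ := norm_pos_iff.2 hf
  refine ⟨a, (ContinuousMap.norm_lt_iff _ hf_pos).2 fun x => ?_⟩
  rw [ha, norm_div, RCLike.norm_of_nonneg (by positivity), div_lt_iff₀ (by positivity)]
  by_cases hx : x ∈ normPeakSet f
  · have hgx : 0 < ‖g x‖ := norm_pos_iff.2 (hg x hx)
    rw [show ‖f x‖ = ‖f‖ from hx]
    exact lt_mul_of_one_lt_right hf_pos (lt_add_of_pos_right 1 (by positivity))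
  · calc
      ‖f x‖ < ‖f‖ := (f.norm_coe_le_norm x).lt_of_ne hx
      _ ≤ ‖f‖ * (1 + ‖g x‖ ^ 2) :=
        le_mul_of_one_le_right hf_pos.le (le_add_of_nonneg_right (by positivity))

theorem isStrongBJOrthogonal_iff {f g : C(X, 𝕜)} :
    IsStrongBJOrthogonal f g ↔ f = 0 ∨ ∃ x ∈ normPeakSet f, g x = 0 := by
  constructor
  · intro horth
    by_contra! ⟨hf, hg⟩
    obtain ⟨a, ha⟩ := exists_norm_add_mul_lt hf hg
    exact (horth a).not_gt ha
  · rintro (rfl | ⟨x, hx, hgx⟩) a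
    · simp
    · calc
        ‖f‖ = ‖f x‖ := hx.symm
        _ = ‖(f + g * a) x‖ := by simp [hgx]
        _ ≤ ‖f + g * a‖ := ContinuousMap.norm_coe_le_norm _ x

theorem stmt10_general (f₁ f₂ : C(X, 𝕜)) (g₁ g₂ : C(Y, 𝕜)) :
    IsStrongBJOrthogonal (elementaryTensor f₁ g₁) (elementaryTensor f₂ g₂) ↔
      IsStrongBJOrthogonal f₁ f₂ ∨ IsStrongBJOrthogonal g₁ g₂ := by
  simp only [isStrongBJOrthogonal_iff, elementaryTensor_eq_zero_iff]
  rcases eq_or_ne f₁ 0 with hf | hf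
  · simp [hf]
  rcases eq_or_ne g₁ 0 with hg | hg
  · simp [hg]
  simp only [hf, hg, false_or, normPeakSet_elementaryTensor hf hg]
  constructor
  · rintro ⟨⟨s, t⟩, ⟨hs, ht⟩, hzero⟩
    exact (mul_eq_zero.1 hzero).imp (fun hfs => ⟨s, hs, hfs⟩) (fun hgt => ⟨t, ht, hgt⟩)
  · rintro (⟨s, hs, hfs⟩ | ⟨t, ht, hgt⟩)
    · obtain ⟨t, ht⟩ := normPeakSet_nonempty hg
      exact ⟨(s, t), ⟨hs, ht⟩, mul_eq_zero_of_left hfs (g₂ t)⟩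
    · obtain ⟨s, hs⟩ := normPeakSet_nonempty hf
      exact ⟨(s, t), ⟨hs, ht⟩, mul_eq_zero_of_right (f₂ s) hgt⟩

end Orthogonality

/-- For nonempty compact Hausdorff spaces `K₁, K₂` and
`f₁, f₂ ∈ C(K₁, ℂ)`, `g₁, g₂ ∈ C(K₂, ℂ)`, the function `(s,t) ↦ f₁ s * g₁ t` is strongly
Birkhoff-James orthogonal to `(s,t) ↦ f₂ s * g₂ t` in the C*-algebra `C(K₁ × K₂, ℂ)` if
and only if `f₁ ⊥ˢ_BJ f₂` in `C(K₁, ℂ)` or `g₁ ⊥ˢ_BJ g₂` in `C(K₂, ℂ)`. -/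
theorem stmt10
    {K₁ K₂ : Type*} [TopologicalSpace K₁] [CompactSpace K₁] [T2Space K₁] [Nonempty K₁]
    [TopologicalSpace K₂] [CompactSpace K₂] [T2Space K₂] [Nonempty K₂]
    (f₁ f₂ : C(K₁, ℂ)) (g₁ g₂ : C(K₂, ℂ)) :
    (∀ h : C(K₁ × K₂, ℂ),
        ‖(f₁.comp ContinuousMap.fst * g₁.comp ContinuousMap.snd) +
            (f₂.comp ContinuousMap.fst * g₂.comp ContinuousMap.snd) * h‖ ≥
          ‖f₁.comp ContinuousMap.fst * g₁.comp ContinuousMap.snd‖) ↔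
      (∀ a : C(K₁, ℂ), ‖f₁ + f₂ * a‖ ≥ ‖f₁‖) ∨
        (∀ b : C(K₂, ℂ), ‖g₁ + g₂ * b‖ ≥ ‖g₁‖) := by
  exact stmt10_general f₁ f₂ g₁ g₂
end
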